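/- Let Ω ⊂ ℝⁿ be a bounded open convex set with nonempty interior and let h(Ω) = inf{ |∂X|/|X| : X ⊆ closure(Ω), X a bounded open convex set with nonempty interior } be its (convex) Cheeger constant. Then h(Ω) ≥ |∂Ω|/(n|Ω|). -/

import Mathlib

open MeasureTheory

/-- The (convex) Cheeger constant of `Ω ⊂ ℝⁿ`: the infimum of `|∂X|/|X|` over bounded
open convex subsets `X` of the closure of `Ω` with nonempty interior. -/
noncomputable def cheegerConstant {n : ℕ} (Ω : Set (EuclideanSpace ℝ (Fin n))) : ℝ :=
  sInf {r : ℝ | ∃ X : Set (EuclideanSpace ℝ (Fin n)),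
    IsOpen X ∧ Bornology.IsBounded X ∧ Convex ℝ X ∧ (interior X).Nonempty ∧
    X ⊆ closure Ω ∧
    r = (μH[(n : ℝ) - 1] (frontier X)).toReal / (volume X).toReal}

open scoped Pointwise ENNReal

abbrev EE (m : ℕ) := EuclideanSpace ℝ (Fin (m+1))

def prism {m : ℕ} (ν : EE m) (h : ℝ) (F : Set (EE m)) (I : Set ℝ) : Set (EE m) :=
  {x | x - (inner ℝ ν x - h) • ν ∈ F ∧ inner ℝ ν x - h ∈ I}

lemma measurableSet_prism {m : ℕ} (ν : EE m) (h : ℝ) {F : Set (EE m)} {I : Set ℝ}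
    (hF : MeasurableSet F) (hI : MeasurableSet I) : MeasurableSet (prism ν h F I) := by
  have h1 : Continuous fun x : EE m => x - (inner ℝ ν x - h) • ν := by fun_prop
  have h2 : Continuous fun x : EE m => inner ℝ ν x - h := by fun_prop
  exact (h1.measurable hF).inter (h2.measurable hI)

lemma volume_prism {m : ℕ} {ν : EE m} (hν : ‖ν‖ = 1) (h : ℝ) {F : Set (EE m)} {I : Set ℝ}
    (hF : MeasurableSet F) (hI : MeasurableSet I) (hFh : ∀ y ∈ F, inner ℝ ν y = h) :
    volume (prism ν h F I) = volume I * μHE[m] F := by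
  have hν0 : ν ≠ 0 := by rintro rfl; simp at hν
  have hνν : inner ℝ ν ν = 1 := by rw [real_inner_self_eq_norm_sq, hν]; norm_num
  have key := EuclideanGeometry.euclideanHausdorffMeasure_eq_lintegral (0 : EE m) hν0
    (measurableSet_prism ν h hF hI)
  rw [InnerProductSpace.euclideanHausdorffMeasure_eq_volume] at key
  rw [key]
  have hfr : Module.finrank ℝ (EE m) - 1 = m := by simp
  rw [hfr]
  have hmem : ∀ (x : ℝ) (z : EE m),
      z ∈ AffineSubspace.mk' (x • ν +ᵥ (0 : EE m)) (Submodule.span ℝ {ν})ᗮ ↔ inner ℝ ν z = x := by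
    intro x z
    rw [AffineSubspace.mem_mk', Submodule.mem_orthogonal_singleton_iff_inner_right]
    simp [inner_sub_right, inner_smul_right, hν, sub_eq_zero]
  have hsl : ∀ x : ℝ, μHE[m] (prism ν h F I ∩
      AffineSubspace.mk' (x • ν +ᵥ (0 : EE m)) (Submodule.span ℝ {ν})ᗮ) =
      ((fun x => x - h) ⁻¹' I).indicator (fun _ => μHE[m] F) x := by
    intro x
    by_cases hx : x - h ∈ I
    · rw [Set.indicator_of_mem (by exact hx)]
      have : prism ν h F I ∩
          AffineSubspace.mk' (x • ν +ᵥ (0 : EE m)) (Submodule.span ℝ {ν})ᗮ =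
          (fun y => (x - h) • ν + y) '' F := by
        ext z
        simp only [Set.mem_inter_iff, SetLike.mem_coe, hmem, prism, Set.mem_ofPred_eq, Set.mem_image]
        constructor
        · rintro ⟨⟨h1, h2⟩, h3⟩
          rw [h3] at h1
          exact ⟨_, h1, by abel⟩
        · rintro ⟨y, hy, rfl⟩
          have : inner ℝ ν ((x - h) • ν + y) = x := by
            rw [inner_add_right, inner_smul_right, hνν, hFh y hy]; ring
          rw [this]
          exact ⟨⟨by simpa using hy, hx⟩, rfl⟩
      rw [this]
      exact (IsometryEquiv.addLeft ((x - h) • ν)).isometry.euclideanHausdorffMeasure_image F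
    · rw [Set.indicator_of_notMem (by exact hx)]
      have : prism ν h F I ∩
          AffineSubspace.mk' (x • ν +ᵥ (0 : EE m)) (Submodule.span ℝ {ν})ᗮ = ∅ := by
        ext z
        simp only [Set.mem_inter_iff, SetLike.mem_coe, hmem, prism, Set.mem_ofPred_eq,
          Set.mem_empty_iff_false, iff_false]
        rintro ⟨⟨h1, h2⟩, h3⟩
        rw [h3] at h2
        exact hx h2
      rw [this, measure_empty]
  simp_rw [hsl]
  have hm : MeasurableSet ((fun x : ℝ => x - h) ⁻¹' I) := (measurable_sub_const h) hI
  have hv : volume ((fun x : ℝ => x - h) ⁻¹' I) = volume I := by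
    simp_rw [sub_eq_add_neg]
    exact measure_preimage_add_right _ _ _
  rw [lintegral_indicator_const hm, hv]
  have : ‖ν‖ₑ = 1 := by rw [← ofReal_norm, hν]; simp
  rw [this, one_mul, mul_comm]

lemma mono_frontier {m : ℕ} {K L : Set (EE m)} (hKo : IsOpen K) (hKc : Convex ℝ K)
    (hKL : K ⊆ L) (hL : Bornology.IsBounded L) :
    μHE[m] (frontier K) ≤ μHE[m] (frontier L) := by
  rcases K.eq_empty_or_nonempty with rfl | ⟨x0, hx0⟩
  · simp
  have ex : ∀ y : frontier K, ∃ z ∈ frontier L, ∀ y' ∈ frontier K, inner ℝ (z - y) (y' - y) ≤ 0 := by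
    rintro ⟨y, hy⟩
    have hyK : y ∉ K := by rw [hKo.frontier_eq] at hy; exact hy.2
    obtain ⟨f, hf⟩ := geometric_hahn_banach_open_point hKc hKo hyK
    set ν := (InnerProductSpace.toDual ℝ (EE m)).symm f with hν
    have hfν : ∀ x, f x = inner ℝ ν x := fun x => by simp [hν]
    have hν0 : ν ≠ 0 := by
      intro h0
      have := hf x0 hx0
      simp [hfν, h0] at this
    have hle : ∀ y' ∈ closure K, inner ℝ ν (y' - y) ≤ 0 := by
      intro y' hy'
      have : closure K ⊆ {z | inner ℝ ν (z - y) ≤ 0} := by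
        apply closure_minimal
        · intro a ha
          have := hf a ha
          simp only [Set.mem_ofPred_eq, ← hfν, map_sub]; linarith
        · exact isClosed_le (by fun_prop) continuous_const
      exact this hy'
    -- ray
    have hyL : y ∈ closure L := closure_mono hKL hy.1
    set T : Set ℝ := {t | 0 ≤ t ∧ y + t • ν ∈ closure L} with hT
    have hT0 : (0:ℝ) ∈ T := ⟨le_rfl, by simpa using hyL⟩
    have hTc : IsClosed T :=
      (isClosed_le continuous_const continuous_id).inter
        (isClosed_closure.preimage (by fun_prop : Continuous fun t : ℝ => y + t • ν))
    obtain ⟨C, hC⟩ := hL.closure.exists_norm_le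
    have hTb : BddAbove T := by
      refine ⟨(C + ‖y‖) / ‖ν‖, ?_⟩
      rintro t ⟨ht, ht'⟩
      rw [le_div_iff₀ (norm_pos_iff.2 hν0)]
      have h1 := hC _ ht'
      have h2 : ‖t • ν‖ ≤ ‖y + t • ν‖ + ‖y‖ := by
        have := norm_sub_le (y + t • ν) y
        simpa using this
      rw [norm_smul, Real.norm_eq_abs, abs_of_nonneg ht] at h2
      linarith
    set t := sSup T with ht
    have htT : t ∈ T := hTc.csSup_mem ⟨0, hT0⟩ hTb
    refine ⟨y + t • ν, ?_, ?_⟩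
    · refine ⟨htT.2, fun hint => ?_⟩
      have hcont : Filter.Tendsto (fun s : ℝ => y + s • ν) (nhds t) (nhds (y + t • ν)) :=
        (by fun_prop : Continuous fun s : ℝ => y + s • ν).tendsto t
      have hev := hcont (mem_interior_iff_mem_nhds.1 hint)
      obtain ⟨ε, hε, hb⟩ := Metric.mem_nhds_iff.1 hev
      have h1 : t + ε / 2 ∈ T := by
        refine ⟨by linarith [htT.1], subset_closure (hb ?_)⟩
        simp [abs_of_pos hε]
        linarith
      have := le_csSup hTb h1
      linarith
    · intro y' hy'
      have := hle y' hy'.1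
      simp only [add_sub_cancel_left, inner_smul_left]
      exact mul_nonpos_of_nonneg_of_nonpos htT.1 this
  choose g hg hg2 using ex
  have hanti : AntilipschitzWith 1 g := by
    apply AntilipschitzWith.of_le_mul_dist
    intro a b
    have h1 := hg2 a b b.2
    have h2 := hg2 b a a.2
    simp only [NNReal.coe_one, one_mul, Subtype.dist_eq, dist_eq_norm]
    have h3 : ‖(a:EE m) - b‖ ^ 2 ≤ inner ℝ (g a - g b) ((a:EE m) - b) := by
      rw [← real_inner_self_eq_norm_sq]
      have e : inner ℝ (g a - g b) ((a:EE m) - b) - inner ℝ ((a:EE m) - b) ((a:EE m) - b) =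
        - inner ℝ (g a - a) ((b:EE m) - a) - inner ℝ (g b - b) ((a:EE m) - b) := by
        simp only [inner_sub_left, inner_sub_right]; ring
      linarith
    have h4 := real_inner_le_norm (g a - g b) ((a:EE m) - b)
    by_contra hlt
    push Not at hlt
    nlinarith [norm_nonneg (g a - g b)]
  have h1 := hanti.le_hausdorffMeasure_image (d := (m:ℝ)) (by positivity) Set.univ
  simp only [ENNReal.coe_one, ENNReal.one_rpow, one_mul] at h1
  have h2 : μH[(m:ℝ)] (frontier K) = μH[(m:ℝ)] (Set.univ : Set (frontier K)) := by
    have := (isometry_subtype_coe (s := frontier K)).hausdorffMeasure_image (d := (m:ℝ))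
      (Or.inl (by positivity)) Set.univ
    rw [← this]
    simp
  have h3 : μH[(m:ℝ)] (g '' Set.univ) ≤ μH[(m:ℝ)] (frontier L) := by
    apply measure_mono
    rintro _ ⟨y, -, rfl⟩
    exact hg y
  simp only [Measure.euclideanHausdorffMeasure_def, Measure.smul_apply]
  have h4 := h2.trans_le (h1.trans h3)
  gcongr ?_ • ?_

def poly {m : ℕ} (S : Finset (EE m × ℝ)) : Set (EE m) := {x | ∀ p ∈ S, inner ℝ p.1 x < p.2}

def facet {m : ℕ} (S : Finset (EE m × ℝ)) (p : EE m × ℝ) : Set (EE m) :=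
  closure (poly S) ∩ {x | inner ℝ p.1 x = p.2}

lemma isOpen_poly {m : ℕ} (S : Finset (EE m × ℝ)) : IsOpen (poly S) := by
  have : poly S = ⋂ p ∈ S, {x | inner ℝ p.1 x < p.2} := by ext; simp [poly]
  rw [this]
  exact isOpen_biInter_finset fun p _ => isOpen_lt (by fun_prop) continuous_const

lemma convex_poly {m : ℕ} (S : Finset (EE m × ℝ)) : Convex ℝ (poly S) := by
  have : poly S = ⋂ p ∈ S, {x | inner ℝ p.1 x < p.2} := by ext; simp [poly]
  rw [this]
  refine convex_iInter₂ fun p _ => ?_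
  exact convex_halfSpace_lt (innerₛₗ ℝ p.1).isLinear p.2

lemma isClosed_facet {m : ℕ} (S : Finset (EE m × ℝ)) (p : EE m × ℝ) : IsClosed (facet S p) :=
  isClosed_closure.inter (isClosed_eq (by fun_prop) continuous_const)

lemma closure_poly_le {m : ℕ} {S : Finset (EE m × ℝ)} {x : EE m} (hx : x ∈ closure (poly S))
    {p : EE m × ℝ} (hp : p ∈ S) : inner ℝ p.1 x ≤ p.2 := by
  have : closure (poly S) ⊆ {x | inner ℝ p.1 x ≤ p.2} :=
    closure_minimal (fun y hy => (hy p hp).le) (isClosed_le (by fun_prop) continuous_const)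
  exact this hx

lemma frontier_poly {m : ℕ} (S : Finset (EE m × ℝ)) :
    frontier (poly S) = ⋃ p ∈ S, facet S p := by
  rw [(isOpen_poly S).frontier_eq]
  ext x
  simp only [Set.mem_sdiff, Set.mem_iUnion, exists_prop, facet, Set.mem_inter_iff,
    Set.mem_ofPred_eq]
  constructor
  · rintro ⟨h1, h2⟩
    simp only [poly, Set.mem_ofPred_eq, not_forall, not_lt] at h2
    obtain ⟨p, hp, h⟩ := h2
    exact ⟨p, hp, h1, le_antisymm (closure_poly_le h1 hp) h⟩
  · rintro ⟨p, hp, h1, h2⟩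
    exact ⟨h1, fun h => (h p hp).ne h2⟩

lemma polyA_aux {m : ℕ} (S : Finset (EE m × ℝ)) (hS : ∀ p ∈ S, ‖p.1‖ = 1) {r : ℝ} (hr : 0 < r)
    (hrS : ∀ p ∈ S, r ≤ p.2) {ε : ℝ} (hε : 0 < ε) :
    volume (poly S) + ENNReal.ofReal ε * ∑ p ∈ S, μHE[m] (facet S p) ≤
      ENNReal.ofReal ((1 + ε / r) ^ (m + 1)) * volume (poly S) := by
  have hnn : ∀ p ∈ S, inner ℝ p.1 p.1 = 1 := fun p hp => by
    rw [real_inner_self_eq_norm_sq, hS p hp]; norm_num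
  set Q : EE m × ℝ → Set (EE m) := fun p => prism p.1 p.2 (facet S p) (Set.Ioo 0 ε) with hQ
  have hQm : ∀ p, MeasurableSet (Q p) := fun p =>
    measurableSet_prism _ _ (isClosed_facet S p).measurableSet measurableSet_Ioo
  have hQv : ∀ p ∈ S, volume (Q p) = ENNReal.ofReal ε * μHE[m] (facet S p) := fun p hp => by
    rw [hQ, volume_prism (hS p hp) _ (isClosed_facet S p).measurableSet measurableSet_Ioo
      (fun y hy => hy.2)]
    simp
  have hdisj : Set.PairwiseDisjoint (S : Set (EE m × ℝ)) Q := by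
    intro p hp q hq hpq
    rw [Function.onFun, Set.disjoint_left]
    rintro x ⟨h1, h2⟩ ⟨h3, h4⟩
    apply hpq
    set t := inner ℝ p.1 x - p.2
    set s := inner ℝ q.1 x - q.2
    have a1 := closure_poly_le h1.1 hq
    have a2 := closure_poly_le h3.1 hp
    have a3 : inner ℝ p.1 (x - t • p.1) = p.2 := h1.2
    have a4 : inner ℝ q.1 (x - s • q.1) = q.2 := h3.2
    simp only [inner_sub_right, inner_smul_right] at a1 a2 a3 a4
    rw [hnn p hp] at a3
    rw [hnn q hq] at a4
    rw [real_inner_comm p.1 q.1] at a1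
    have a5 : inner ℝ p.1 q.1 ≤ 1 := by
      have := real_inner_le_norm p.1 q.1
      rwa [hS p hp, hS q hq, one_mul] at this
    have ht : 0 < t := h2.1
    have hs : 0 < s := h4.1
    set c : ℝ := inner ℝ p.1 q.1
    have b1 : s ≤ t * c := by linarith
    have b2 : t ≤ s * c := by linarith
    have b3 : t * c ≤ t := by nlinarith
    have b4 : s * c ≤ s := by nlinarith
    have hst : s = t := le_antisymm (b1.trans b3) (b2.trans b4)
    have hc : c = 1 := by
      apply le_antisymm a5
      rw [hst] at b1
      by_contra h
      push Not at h
      nlinarith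
    have hpq1 : p.1 = q.1 := (inner_eq_one_iff_of_norm_eq_one (hS p hp) (hS q hq)).1 hc
    refine Prod.ext hpq1 ?_
    have : inner ℝ p.1 x = inner ℝ q.1 x := by rw [hpq1]
    linarith
  have hdisj2 : Disjoint (poly S) (⋃ p ∈ S, Q p) := by
    rw [Set.disjoint_left]
    intro x hx hx'
    simp only [Set.mem_iUnion, exists_prop] at hx'
    obtain ⟨p, hp, h1, h2⟩ := hx'
    have := hx p hp
    have := h2.1
    linarith
  have hpos : 0 < 1 + ε / r := by positivity
  have hsub : poly S ∪ (⋃ p ∈ S, Q p) ⊆ (1 + ε / r) • poly S := by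
    intro x hx
    rw [Set.mem_smul_set_iff_inv_smul_mem₀ hpos.ne']
    intro q hq
    rw [inner_smul_right, inv_mul_lt_iff₀ hpos]
    have hq2 := hrS q hq
    have e1 : q.2 + ε ≤ (1 + ε / r) * q.2 := by
      have : ε = ε / r * r := by field_simp
      have : ε / r * r ≤ ε / r * q.2 := by gcongr
      linarith
    rcases hx with hx | hx
    · have := hx q hq
      linarith
    · simp only [Set.mem_iUnion, exists_prop] at hx
      obtain ⟨p, hp, h1, h2⟩ := hx
      have a1 := closure_poly_le h1.1 hq
      simp only [inner_sub_right, inner_smul_right] at a1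
      have a5 : inner ℝ q.1 p.1 ≤ 1 := by
        have := real_inner_le_norm q.1 p.1
        rwa [hS p hp, hS q hq, one_mul] at this
      have ht := h2.1
      have ht2 := h2.2
      nlinarith
  have hm := measure_mono (μ := volume) hsub
  rw [measure_union hdisj2 (Finset.measurableSet_biUnion S fun p _ => hQm p),
    measure_biUnion_finset hdisj (fun p _ => hQm p), Finset.sum_congr rfl hQv, ← Finset.mul_sum,
    Measure.addHaar_smul] at hm
  rw [abs_of_pos (by positivity)] at hm
  simpa using hm

lemma polyA {m : ℕ} (S : Finset (EE m × ℝ)) (hS : ∀ p ∈ S, ‖p.1‖ = 1) {r : ℝ} (hr : 0 < r)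
    (hrS : Metric.ball 0 r ⊆ poly S) (hv : volume (poly S) ≠ ⊤) :
    ENNReal.ofReal r * μHE[m] (frontier (poly S)) ≤ (m + 1 : ℝ≥0∞) * volume (poly S) := by
  have hrS' : ∀ p ∈ S, r ≤ p.2 := by
    intro p hp
    apply le_of_forall_lt
    intro c hc
    rcases lt_or_ge c 0 with h0 | h0
    · have := hrS (Metric.mem_ball_self hr) p hp
      simp at this
      linarith
    · have : c • p.1 ∈ Metric.ball (0 : EE m) r := by
        simp [norm_smul, hS p hp, abs_of_nonneg h0, hc]
      have := hrS this p hp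
      rw [inner_smul_right, real_inner_self_eq_norm_sq, hS p hp] at this
      linarith
  have key := fun ε (hε : 0 < ε) => polyA_aux S hS hr hrS' (ε := ε) hε
  set s := ∑ p ∈ S, μHE[m] (facet S p) with hs
  have hle : μHE[m] (frontier (poly S)) ≤ s := by
    rw [frontier_poly]; exact measure_biUnion_finset_le _ _
  set V := volume (poly S)
  have hsfin : s ≠ ⊤ := by
    have := key 1 one_pos
    intro h
    rw [h] at this
    simp at this
    exact ENNReal.mul_ne_top (by simp) hv this
  have hreal : ∀ ε, 0 < ε → s.toReal ≤ V.toReal * (ε⁻¹ * ((1 + ε / r) ^ (m + 1) - 1)) := by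
    intro ε hε
    have h1 := ENNReal.toReal_mono (ENNReal.mul_ne_top (by simp) hv) (key ε hε)
    rw [ENNReal.toReal_add hv (ENNReal.mul_ne_top (by simp) hsfin), ENNReal.toReal_mul,
      ENNReal.toReal_mul, ENNReal.toReal_ofReal hε.le, ENNReal.toReal_ofReal (by positivity)] at h1
    have : s.toReal = ε⁻¹ * (ε * s.toReal) := by field_simp
    rw [this]
    have : V.toReal * (ε⁻¹ * ((1 + ε / r) ^ (m + 1) - 1)) =
      ε⁻¹ * (V.toReal * ((1 + ε / r) ^ (m + 1) - 1)) := by ring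
    rw [this]
    refine mul_le_mul_of_nonneg_left ?_ (by positivity)
    linarith
  have hder : HasDerivAt (fun ε : ℝ => (1 + ε / r) ^ (m + 1)) ((m + 1) / r) 0 := by
    have h1 : HasDerivAt (fun ε : ℝ => 1 + ε / r) (1 / r) 0 :=
      ((hasDerivAt_id (0:ℝ)).div_const r).const_add 1
    have := h1.pow (m + 1)
    have e : ((m : ℝ) + 1) / r = ((m + 1 : ℕ) : ℝ) * (1 + 0 / r) ^ (m + 1 - 1) * (1 / r) := by
      simp; ring
    rw [e]
    exact this
  have hlim := hder.tendsto_slope_zero_right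
  have hlim2 := hlim.const_mul V.toReal
  have hfin : s.toReal ≤ V.toReal * ((m + 1) / r) := by
    refine ge_of_tendsto hlim2 ?_
    filter_upwards [self_mem_nhdsWithin] with ε hε
    simpa using hreal ε hε
  calc ENNReal.ofReal r * μHE[m] (frontier (poly S)) ≤ ENNReal.ofReal r * s := by gcongr
    _ = ENNReal.ofReal (r * s.toReal) := by
      rw [ENNReal.ofReal_mul hr.le, ENNReal.ofReal_toReal hsfin]
    _ ≤ ENNReal.ofReal ((m + 1) * V.toReal) := by
      apply ENNReal.ofReal_le_ofReal
      calc r * s.toReal ≤ r * (V.toReal * ((m + 1) / r)) := by gcongr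
        _ = _ := by field_simp
    _ = _ := by
      rw [ENNReal.ofReal_mul (by positivity), ENNReal.ofReal_toReal hv]
      congr 1
      exact_mod_cast ENNReal.ofReal_natCast (m + 1)

lemma polyB {m : ℕ} (S : Finset (EE m × ℝ)) (hS : ∀ p ∈ S, ‖p.1‖ = 1) {R : ℝ}
    (hb : Bornology.IsBounded (poly S))
    (hR : ∀ x d, 0 < d → Metric.ball x d ⊆ poly S → d ≤ R) :
    volume (poly S) ≤ ENNReal.ofReal R * μHE[m] (frontier (poly S)) := by
  set e := S.equivFin with he
  set f : Fin S.card → Set (EE m) := fun i => facet S (e.symm i) with hf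
  set g := disjointed f with hg
  have hgm : ∀ i, MeasurableSet (g i) := fun i =>
    disjointedRec (fun _ _ ht => MeasurableSet.diff ht (isClosed_facet S _).measurableSet)
      (isClosed_facet S _).measurableSet
  have hgf : ∀ i, g i ⊆ f i := fun i => disjointed_subset f i
  have hU : ⋃ i, g i = frontier (poly S) := by
    rw [hg, iUnion_disjointed, frontier_poly]
    ext x
    simp only [Set.mem_iUnion, hf, exists_prop]
    constructor
    · rintro ⟨i, hi⟩
      exact ⟨_, (e.symm i).2, hi⟩
    · rintro ⟨p, hp, h⟩
      exact ⟨e ⟨p, hp⟩, by simpa using h⟩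
  have hcover : poly S ⊆ ⋃ i, prism (e.symm i).1.1 (e.symm i).1.2 (g i) (Set.Icc (-R) 0) := by
    intro x hx
    have hne : ((poly S)ᶜ).Nonempty := by
      rw [Set.nonempty_compl]
      intro h
      rw [h] at hb
      exact NormedSpace.unbounded_univ ℝ (EE m) hb
    obtain ⟨y, hy, hxy⟩ := (isOpen_poly S).isClosed_compl.exists_infDist_eq_dist hne x
    set d := dist x y with hd
    have hball : Metric.ball x d ⊆ poly S := by
      intro z hz
      by_contra hz'
      have := Metric.infDist_le_dist_of_mem (x := x) (show z ∈ (poly S)ᶜ from hz')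
      rw [Metric.mem_ball, dist_comm] at hz
      linarith
    have hd0 : 0 < d := dist_pos.2 (by rintro rfl; exact hy hx)
    have hdR := hR x d hd0 hball
    have hycl : y ∈ closure (poly S) := by
      apply closure_mono hball
      rw [closure_ball x hd0.ne', Metric.mem_closedBall, dist_comm]
    have hyf : y ∈ ⋃ i, g i := by
      rw [hU, (isOpen_poly S).frontier_eq]
      exact ⟨hycl, hy⟩
    obtain ⟨i, hi⟩ := Set.mem_iUnion.1 hyf
    refine Set.mem_iUnion.2 ⟨i, ?_⟩
    set p := (e.symm i).1 with hp
    have hpS : p ∈ S := (e.symm i).2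
    have hyp : inner ℝ p.1 y = p.2 := (hgf i hi).2
    have hnn : inner ℝ p.1 p.1 = 1 := by
      rw [real_inner_self_eq_norm_sq, hS p hpS]; norm_num
    have h1 : inner ℝ p.1 x + d ≤ p.2 := by
      have : x + d • p.1 ∈ closure (poly S) := by
        apply closure_mono hball
        rw [closure_ball x hd0.ne', Metric.mem_closedBall]
        simp [norm_smul, hS p hpS, abs_of_pos hd0]
      have := closure_poly_le this hpS
      rwa [inner_add_right, inner_smul_right, hnn, mul_one] at this
    have h2 : y - x = d • p.1 := by
      have hn : ‖y - x‖ = d := by rw [← dist_eq_norm, dist_comm]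
      have : ‖y - x - d • p.1‖ ^ 2 ≤ 0 := by
        rw [norm_sub_sq_real, hn, norm_smul, hS p hpS, inner_smul_right, real_inner_comm,
          inner_sub_right, hyp, Real.norm_eq_abs, abs_of_pos hd0]
        nlinarith
      have h0 : ‖y - x - d • p.1‖ = 0 := by nlinarith [norm_nonneg (y - x - d • p.1)]
      exact sub_eq_zero.1 (norm_eq_zero.1 h0)
    have h3 : inner ℝ p.1 x - p.2 = -d := by
      have hx' : x = y - d • p.1 := by rw [← h2]; abel
      rw [hx', inner_sub_right, inner_smul_right, hnn, hyp]; ring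
    constructor
    · rw [h3, neg_smul, sub_neg_eq_add, ← h2]
      simpa using hi
    · rw [h3]
      constructor <;> linarith
  calc volume (poly S) ≤ ∑ i, volume (prism (e.symm i).1.1 (e.symm i).1.2 (g i) (Set.Icc (-R) 0)) :=
        (measure_mono hcover).trans (measure_iUnion_fintype_le _ _)
    _ = ∑ i, ENNReal.ofReal R * μHE[m] (g i) := by
        refine Finset.sum_congr rfl fun i _ => ?_
        rw [volume_prism (hS _ (e.symm i).2) _ (hgm i) measurableSet_Icc
          (fun y hy => (hgf i hy).2)]
        simp
    _ = ENNReal.ofReal R * μHE[m] (frontier (poly S)) := by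
        rw [← Finset.mul_sum, ← hU, measure_iUnion (disjoint_disjointed f) hgm, tsum_fintype]

lemma approx {m : ℕ} {K : Set (EE m)} (hKo : IsOpen K) (hKc : Convex ℝ K)
    (hKb : Bornology.IsBounded K) (h0 : (0 : EE m) ∈ K) {c : ℝ} (hc : 1 < c) :
    ∃ S : Finset (EE m × ℝ), (∀ p ∈ S, ‖p.1‖ = 1) ∧ K ⊆ poly S ∧ poly S ⊆ c • K := by
  have hc0 : c ≠ 0 := by positivity
  have hUo : IsOpen (c • K) := hKo.smul₀ hc0
  have hUb : Bornology.IsBounded (c • K) := hKb.smul₀ c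
  have hcl : closure K ⊆ c • K := by
    have := hKc.closure_subset_interior_image_homothety_of_one_lt
      (by rwa [hKo.interior_eq]) c hc
    refine this.trans (interior_subset.trans ?_)
    rintro _ ⟨x, hx, rfl⟩
    exact ⟨x, hx, by simp [AffineMap.homothety_apply]⟩
  have hcomp : IsCompact (frontier (c • K)) :=
    Metric.isCompact_of_isClosed_isBounded isClosed_frontier
      (hUb.closure.subset frontier_subset_closure)
  have ex : ∀ y ∈ frontier (c • K), ∃ p : EE m × ℝ, ‖p.1‖ = 1 ∧ p.2 < inner ℝ p.1 y ∧
      ∀ a ∈ K, inner ℝ p.1 a < p.2 := by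
    intro y hy
    have hy' : y ∉ closure K := by
      rw [hUo.frontier_eq] at hy
      exact fun h => hy.2 (hcl h)
    obtain ⟨f, u, h1, h2⟩ := geometric_hahn_banach_closed_point hKc.closure isClosed_closure hy'
    set ν := (InnerProductSpace.toDual ℝ (EE m)).symm f with hν
    have hfν : ∀ x, f x = inner ℝ ν x := fun x => by simp [hν]
    have hν0 : ν ≠ 0 := by
      intro h
      have := h1 0 (subset_closure h0)
      simp only [hfν, h, inner_zero_left] at this h2
      linarith
    have hn : 0 < ‖ν‖ := norm_pos_iff.2 hν0
    refine ⟨(‖ν‖⁻¹ • ν, ‖ν‖⁻¹ * u), ?_, ?_, ?_⟩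
    · simp [norm_smul, hn.ne']
    · simp only [real_inner_smul_left, ← hfν]
      gcongr
    · intro a ha
      have := h1 a (subset_closure ha)
      simp only [real_inner_smul_left, ← hfν]
      gcongr
  choose! p hp1 hp2 hp3 using ex
  obtain ⟨t, ht, hcov⟩ := hcomp.elim_nhds_subcover (fun y => {x | (p y).2 < inner ℝ (p y).1 x})
    (fun y hy => (isOpen_lt continuous_const (by fun_prop)).mem_nhds (hp2 y hy))
  classical
  refine ⟨t.image p, ?_, ?_, ?_⟩
  · intro q hq
    obtain ⟨y, hy, rfl⟩ := Finset.mem_image.1 hq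
    exact hp1 y (ht y hy)
  · intro x hx q hq
    obtain ⟨y, hy, rfl⟩ := Finset.mem_image.1 hq
    exact hp3 y (ht y hy) x hx
  · refine (convex_poly _).isPreconnected.subset_left_of_subset_union hUo
      (isClosed_closure (s := c • K)).isOpen_compl
      (Set.disjoint_compl_right_iff_subset.2 subset_closure) ?_ ⟨0, ?_, ⟨0, h0, by simp⟩⟩
    · intro x hx
      by_contra hcon
      simp only [Set.mem_union, Set.mem_compl_iff, not_or, not_not] at hcon
      have hxf : x ∈ frontier (c • K) := by
        rw [hUo.frontier_eq]; exact ⟨hcon.2, hcon.1⟩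
      obtain ⟨y, hy, hxy⟩ := Set.mem_iUnion₂.1 (hcov hxf)
      have := hx (p y) (Finset.mem_image_of_mem _ hy)
      exact lt_asymm this hxy
    · intro q hq
      obtain ⟨y, hy, rfl⟩ := Finset.mem_image.1 hq
      exact hp3 y (ht y hy) 0 h0

lemma le_of_scale {a b : ℝ≥0∞} {k : ℕ} (h : ∀ c : ℝ, 1 < c → a ≤ ENNReal.ofReal (c ^ k) * b) :
    a ≤ b := by
  by_cases hb : b = ⊤
  · simp [hb]
  have hlim : Filter.Tendsto (fun c : ℝ => ENNReal.ofReal (c ^ k) * b) (nhdsWithin 1 (Set.Ioi 1))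
      (nhds (ENNReal.ofReal (1 ^ k) * b)) := by
    refine ENNReal.Tendsto.mul_const ?_ (Or.inr hb)
    refine ENNReal.tendsto_ofReal ?_
    exact ((continuous_pow k).tendsto (1:ℝ)).mono_left nhdsWithin_le_nhds
  have := ge_of_tendsto hlim (by
    filter_upwards [self_mem_nhdsWithin] with c hc
    exact h c hc)
  simpa using this

lemma thmA0 {m : ℕ} {K : Set (EE m)} (hKo : IsOpen K) (hKc : Convex ℝ K)
    (hKb : Bornology.IsBounded K) {r : ℝ} (hr : 0 < r) (hrK : Metric.ball 0 r ⊆ K) :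
    ENNReal.ofReal r * μHE[m] (frontier K) ≤ (m + 1 : ℝ≥0∞) * volume K := by
  apply le_of_scale (k := m + 1)
  intro c hc
  obtain ⟨S, hS, h1, h2⟩ := approx hKo hKc hKb (hrK (Metric.mem_ball_self hr)) hc
  have hPb : Bornology.IsBounded (poly S) := (hKb.smul₀ c).subset h2
  calc ENNReal.ofReal r * μHE[m] (frontier K)
      ≤ ENNReal.ofReal r * μHE[m] (frontier (poly S)) := by
        have := mono_frontier hKo hKc h1 hPb
        exact mul_le_mul_right this _
    _ ≤ (m + 1 : ℝ≥0∞) * volume (poly S) :=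
        polyA S hS hr (hrK.trans h1) hPb.measure_lt_top.ne
    _ ≤ (m + 1 : ℝ≥0∞) * volume (c • K) := by gcongr
    _ = _ := by
        rw [Measure.addHaar_smul, abs_of_pos (by positivity)]
        simp only [finrank_euclideanSpace, Fintype.card_fin]
        ring

lemma thmB0 {m : ℕ} {X : Set (EE m)} (hXo : IsOpen X) (hXc : Convex ℝ X)
    (hXb : Bornology.IsBounded X) (h0 : (0 : EE m) ∈ X) {R : ℝ}
    (hR : ∀ x d, 0 < d → Metric.ball x d ⊆ X → d ≤ R) :
    volume X ≤ ENNReal.ofReal R * μHE[m] (frontier X) := by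
  apply le_of_scale (k := m + 1)
  intro c hc
  have hc0 : c ≠ 0 := by positivity
  obtain ⟨S, hS, h1, h2⟩ := approx (K := c⁻¹ • X) (hXo.smul₀ (inv_ne_zero hc0)) (hXc.smul _)
    (hXb.smul₀ _) ⟨0, h0, by simp⟩ hc
  rw [smul_inv_smul₀ hc0] at h2
  have e : X = c • c⁻¹ • X := (smul_inv_smul₀ hc0 X).symm
  calc volume X = ENNReal.ofReal (c ^ (m + 1)) * volume (c⁻¹ • X) := by
        conv_lhs => rw [e]
        rw [Measure.addHaar_smul, abs_of_pos (by positivity)]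
        simp only [finrank_euclideanSpace, Fintype.card_fin]
    _ ≤ ENNReal.ofReal (c ^ (m + 1)) * volume (poly S) := by gcongr
    _ ≤ ENNReal.ofReal (c ^ (m + 1)) * (ENNReal.ofReal R * μHE[m] (frontier X)) := by
        refine mul_le_mul_right ?_ _
        refine (polyB S hS (hXb.subset h2) fun x d hd hb => hR x d hd (hb.trans h2)).trans ?_
        exact mul_le_mul_right (mono_frontier (isOpen_poly S) (convex_poly S) h2 hXb) _

lemma trans_frontier {m : ℕ} (x : EE m) (K : Set (EE m)) :
    μHE[m] (frontier ((fun y => x + y) ⁻¹' K)) = μHE[m] (frontier K) := by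
  have h1 := (Homeomorph.addLeft x).preimage_frontier K
  have h2 := (IsometryEquiv.addLeft x).isometry.euclideanHausdorffMeasure_preimage (d := m)
    (frontier K)
  rw [(IsometryEquiv.addLeft x).range_eq_univ, Set.inter_univ] at h2
  rw [← h2]
  exact congrArg _ h1.symm

lemma trans_bdd {m : ℕ} (x : EE m) {K : Set (EE m)} (hK : Bornology.IsBounded K) :
    Bornology.IsBounded ((fun y => x + y) ⁻¹' K) :=
  (IsometryEquiv.addLeft x).isometry.antilipschitz.isBounded_preimage hK

lemma thmA {m : ℕ} {K : Set (EE m)} (hKo : IsOpen K) (hKc : Convex ℝ K)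
    (hKb : Bornology.IsBounded K) {x : EE m} {r : ℝ} (hr : 0 < r) (hrK : Metric.ball x r ⊆ K) :
    ENNReal.ofReal r * μHE[m] (frontier K) ≤ (m + 1 : ℝ≥0∞) * volume K := by
  have := thmA0 (K := (fun y => x + y) ⁻¹' K) (hKo.preimage (by fun_prop))
    (hKc.translate_preimage_right x) (trans_bdd x hKb) hr
    (fun y hy => hrK (by simpa using hy))
  rwa [trans_frontier, measure_preimage_add] at this

lemma thmB {m : ℕ} {X : Set (EE m)} (hXo : IsOpen X) (hXc : Convex ℝ X)
    (hXb : Bornology.IsBounded X) (h0 : X.Nonempty) {R : ℝ}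
    (hR : ∀ x d, 0 < d → Metric.ball x d ⊆ X → d ≤ R) :
    volume X ≤ ENNReal.ofReal R * μHE[m] (frontier X) := by
  obtain ⟨x, hx⟩ := h0
  have := thmB0 (X := (fun y => x + y) ⁻¹' X) (hXo.preimage (by fun_prop))
    (hXc.translate_preimage_right x) (trans_bdd x hXb) (by simpa using hx) (R := R)
    (fun y d hd hb => hR (x + y) d hd (fun z hz => by
      have : z - x ∈ Metric.ball y d := by
        rw [Metric.mem_ball, dist_eq_norm] at hz ⊢
        rwa [sub_sub]
      simpa using hb this))
  rwa [trans_frontier, measure_preimage_add] at this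

lemma main_ineq {m : ℕ} {Ω X : Set (EE m)} (hΩo : IsOpen Ω) (hΩb : Bornology.IsBounded Ω)
    (hΩc : Convex ℝ Ω) (hΩne : Ω.Nonempty) (hXo : IsOpen X) (hXb : Bornology.IsBounded X)
    (hXc : Convex ℝ X) (hXne : X.Nonempty) (hX : X ⊆ closure Ω) :
    (μHE[m] (frontier Ω)).toReal / (((m + 1 : ℕ) : ℝ) * (volume Ω).toReal) ≤
      (μHE[m] (frontier X)).toReal / (volume X).toReal := by
  have hfin : ∀ {K : Set (EE m)}, IsOpen K → Convex ℝ K → Bornology.IsBounded K → K.Nonempty →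
      μHE[m] (frontier K) ≠ ⊤ := by
    rintro K h1 h2 h3 ⟨x, hx⟩ h
    obtain ⟨r, hr, hb⟩ := Metric.isOpen_iff.1 h1 x hx
    have := thmA h1 h2 h3 hr hb
    rw [h, ENNReal.mul_top (by simpa using hr), top_le_iff] at this
    exact ENNReal.mul_ne_top (by exact_mod_cast ENNReal.natCast_ne_top (m + 1))
      h3.measure_lt_top.ne this
  have hPfin := hfin hΩo hΩc hΩb hΩne
  have hpfin := hfin hXo hXc hXb hXne
  have hVfin : volume Ω ≠ ⊤ := hΩb.measure_lt_top.ne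
  have hvfin : volume X ≠ ⊤ := hXb.measure_lt_top.ne
  have hV : 0 < (volume Ω).toReal := ENNReal.toReal_pos (hΩo.measure_pos _ hΩne).ne' hVfin
  have hv : 0 < (volume X).toReal := ENNReal.toReal_pos (hXo.measure_pos _ hXne).ne' hvfin
  set P := (μHE[m] (frontier Ω)).toReal with hP
  have hP0 : 0 ≤ P := ENNReal.toReal_nonneg
  rcases hP0.eq_or_lt with h0 | h0
  · rw [← h0, zero_div]; positivity
  have hR : ∀ x d, 0 < d → Metric.ball x d ⊆ X → d ≤ (m + 1 : ℕ) * (volume Ω).toReal / P := by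
    intro x d hd hb
    have hb2 : Metric.ball x d ⊆ Ω := by
      have h1 : Metric.ball x d ⊆ interior (closure Ω) :=
        interior_maximal (hb.trans hX) Metric.isOpen_ball
      rwa [hΩc.interior_closure_eq_interior_of_nonempty_interior
        (by rwa [hΩo.interior_eq]), hΩo.interior_eq] at h1
    have h2 := thmA hΩo hΩc hΩb hd hb2
    have h3 := ENNReal.toReal_mono (ENNReal.mul_ne_top
      (by exact_mod_cast ENNReal.natCast_ne_top (m + 1)) hVfin) h2
    rw [ENNReal.toReal_mul, ENNReal.toReal_mul, ENNReal.toReal_ofReal hd.le] at h3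
    have e : ((m : ℝ≥0∞) + 1).toReal = ((m + 1 : ℕ) : ℝ) := by
      exact_mod_cast ENNReal.toReal_natCast (m + 1)
    rw [e] at h3
    rwa [le_div_iff₀ h0]
  have hB := thmB hXo hXc hXb hXne hR
  have h3 := ENNReal.toReal_mono (ENNReal.mul_ne_top (by simp) hpfin) hB
  rw [ENNReal.toReal_mul, ENNReal.toReal_ofReal (by positivity)] at h3
  have hn : (0:ℝ) < (m + 1 : ℕ) := by positivity
  rw [div_mul_eq_mul_div, le_div_iff₀ h0] at h3
  rw [div_le_div_iff₀ (by positivity) hv]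
  linarith

/-- Lower bound for the Cheeger constant of a bounded open convex set `Ω ⊂ ℝⁿ`:
`h(Ω) ≥ |∂Ω| / (n |Ω|)`. -/
theorem cheeger_constant_lower_bound
    (n : ℕ)
    (Ω : Set (EuclideanSpace ℝ (Fin n)))
    (hΩo : IsOpen Ω) (hΩb : Bornology.IsBounded Ω)
    (hΩc : Convex ℝ Ω) (hΩne : (interior Ω).Nonempty) :
    (μH[(n : ℝ) - 1] (frontier Ω)).toReal / ((n : ℝ) * (volume Ω).toReal) ≤
      cheegerConstant Ω := by
  unfold cheegerConstant
  refine le_csInf ⟨_, Ω, hΩo, hΩb, hΩc, hΩne, subset_closure, rfl⟩ ?_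
  rintro _ ⟨X, hXo, hXb, hXc, hXne, hX, rfl⟩
  rcases n with _ | m
  · simp only [Nat.cast_zero, zero_mul, div_zero]
    positivity
  have hm : ((m + 1 : ℕ) : ℝ) - 1 = (m : ℝ) := by push_cast; ring
  rw [hm]
  have key := main_ineq hΩo hΩb hΩc (hΩne.mono interior_subset) hXo hXb hXc
    (hXne.mono interior_subset) hX
  have hk := Measure.addHaarScalarFactor_volume_hausdorffMeasure_ne_zero m
  simp only [Measure.euclideanHausdorffMeasure_def, Measure.smul_apply] at key
  generalize Measure.addHaarScalarFactor (volume : Measure (EuclideanSpace ℝ (Fin m))) μH[(m : ℝ)]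
    = k at key hk
  have hk' : (0:ℝ) < k := by positivity
  have e : ∀ a : ℝ≥0∞, (k • a).toReal = k * a.toReal := fun a => by
    rw [ENNReal.smul_def, smul_eq_mul, ENNReal.toReal_mul]; simp
  rw [e, e, mul_div_assoc, mul_div_assoc] at key
  exact le_of_mul_le_mul_left key hk'
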